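/- Stability of the algorithm's output (Proposition 2, one-to-one form): the matching output by the consumer-proposing deferred-acceptance algorithm on a one-to-one matching market with complete strict preferences is a matching (each seller and each consumer appears in at most one pair) and is stable, i.e., it admits no blocking pair. -/

import Mathlib

/-!
Stability rests on an invariant of the algorithm's states (`DAInvariant`), preserved by every round:
held consumers have proposed to their holders and are held only once; a seller that has received a
proposal from `c` holds a consumer at least as good as `c`; and each consumer proposes down its
preference list, so the set of sellers it has proposed to is upward closed.

Let `(s, c)` be a blocking pair at termination. If `c` has proposed to `s`, then `s` holds a consumer
at least as good as `c`, so `s` does not gain. If `c` has not proposed to `s`, then, as `c` makes no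
proposal, `c` is held by some `s'`; it has proposed to `s'`, hence to every seller better than `s'`,
hence to `s`, a contradiction.
-/

/-!
The consumer-proposing deferred-acceptance algorithm on a one-to-one matching
market.  The market has finite sets of sellers `S` and consumers `C`; the
complete strict preference order of each seller `s` over consumers is given
as a linear order `prefS s` on `C` (larger means more preferred), and the
preference of each consumer `c` over sellers as a linear order `prefC c` on
`S` (larger means more preferred).

A state of the algorithm records the tentative match `held s` of every seller
`s` and the set `proposed c` of sellers that consumer `c` has proposed to so
far.  In each round every currently unmatched consumer that has not yet
proposed to every seller proposes to its most preferred seller among those it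
has not yet proposed to, and every seller tentatively accepts the consumer it
most prefers among its current tentative match and its new proposers,
rejecting all others.
-/

open scoped Classical

noncomputable section

/-- A state of the deferred-acceptance algorithm: the tentative match of every
seller and the set of sellers each consumer has proposed to so far. -/
structure DAState (S C : Type*) where
  held : S → Option C
  proposed : C → Finset S

variable {S C : Type*} [Fintype S] [Fintype C] [DecidableEq S] [DecidableEq C]

/-- The proposal made by consumer `c` in the round starting from state `st`:
if `c` is currently unmatched and has not proposed to every seller, it
proposes to its most preferred seller among those not yet proposed to;
otherwise it makes no proposal. -/
def proposes (prefC : C → LinearOrder S) (st : DAState S C) (c : C) : Option S :=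
  letI := prefC c
  if h : (¬ ∃ s : S, st.held s = some c) ∧ (Finset.univ \ st.proposed c).Nonempty then
    some ((Finset.univ \ st.proposed c).max' h.2)
  else none

/-- One round of the consumer-proposing deferred-acceptance algorithm: each
seller tentatively accepts the single consumer it most prefers among its
current tentative match (if any) and its new proposers, rejecting all others,
and each proposing consumer records its proposal. -/
def daStep (prefS : S → LinearOrder C) (prefC : C → LinearOrder S)
    (st : DAState S C) : DAState S C where
  held s :=
    letI := prefS s
    let cands : Finset C :=
      (st.held s).toFinset ∪ Finset.univ.filter (fun c => proposes prefC st c = some s)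
    if h : cands.Nonempty then some (cands.max' h) else none
  proposed c :=
    match proposes prefC st c with
    | some s => insert s (st.proposed c)
    | none => st.proposed c

/-- The initial state: no seller holds a consumer, nobody has proposed. -/
def daInit : DAState S C := ⟨fun _ => none, fun _ => ∅⟩

/-- The state of the deferred-acceptance algorithm after `n` rounds. -/
def runDA (prefS : S → LinearOrder C) (prefC : C → LinearOrder S) (n : ℕ) :
    DAState S C :=
  (daStep prefS prefC)^[n] daInit

/-- Consumer `c` proposes to seller `s` in round `t + 1`, i.e. in the round
executed from the state reached after `t` rounds. -/
def ProposesAt (prefS : S → LinearOrder C) (prefC : C → LinearOrder S)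
    (t : ℕ) (c : C) (s : S) : Prop :=
  proposes prefC (runDA prefS prefC t) c = some s

/-- The algorithm has terminated after `n` rounds: every consumer is either
tentatively matched or has proposed to every seller, so no proposal is made. -/
def TerminatedAt (prefS : S → LinearOrder C) (prefC : C → LinearOrder S)
    (n : ℕ) : Prop :=
  ∀ c : C, proposes prefC (runDA prefS prefC n) c = none

/-- Seller `s` rejects consumer `c` in round `t + 1`: `c` proposes to `s` in
that round or is tentatively held by `s`, and `c` is not the consumer that `s`
tentatively accepts in that round. -/
def RejectsAt (prefS : S → LinearOrder C) (prefC : C → LinearOrder S)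
    (t : ℕ) (s : S) (c : C) : Prop :=
  (ProposesAt prefS prefC t c s ∨ (runDA prefS prefC t).held s = some c) ∧
  (runDA prefS prefC (t + 1)).held s ≠ some c

/-- Seller `s` prefers consumer `c` to consumer `c'`. -/
def sPrefRel (prefS : S → LinearOrder C) (s : S) (c c' : C) : Prop :=
  (prefS s).lt c' c

/-- Consumer `c` prefers seller `s` to seller `s'`. -/
def cPrefRel (prefC : C → LinearOrder S) (c : C) (s s' : S) : Prop :=
  (prefC c).lt s' s

/-- The tentative matching after `n` rounds, as a set of seller–consumer
pairs; when the algorithm has terminated after `n` rounds this is its output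
matching. -/
def outputMatching (prefS : S → LinearOrder C) (prefC : C → LinearOrder S)
    (n : ℕ) : Finset (S × C) :=
  Finset.univ.filter (fun p : S × C => (runDA prefS prefC n).held p.1 = some p.2)

/-- `μ` is a (one-to-one) matching: every seller and every consumer appears
in at most one pair of `μ`. -/
def IsOneToOneMatching {S C : Type*} [DecidableEq S] [DecidableEq C]
    (μ : Finset (S × C)) : Prop :=
  (∀ s : S, (μ.filter fun p => p.1 = s).card ≤ 1) ∧
  (∀ c : C, (μ.filter fun p => p.2 = c).card ≤ 1)

/-- `(s, c) ∉ μ` is a blocking pair for `μ`: `c` is unmatched or prefers `s`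
to its matched seller, and `s` is unmatched or prefers `c` to its matched
consumer. -/
def IsBlockingPair {S C : Type*}
    (prefS : S → C → C → Prop) (prefC : C → S → S → Prop)
    (μ : Finset (S × C)) (s : S) (c : C) : Prop :=
  (s, c) ∉ μ ∧
  (∀ s' : S, (s', c) ∈ μ → prefC c s s') ∧
  (∀ c' : C, (s, c') ∈ μ → prefS s c c')

/-- The invariant of deferred-acceptance states that yields stability. -/
structure DAInvariant (prefS : S → LinearOrder C) (prefC : C → LinearOrder S)
    (st : DAState S C) : Prop where
  held_proposed : ∀ s c, st.held s = some c → s ∈ st.proposed c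
  held_unique : ∀ s s' c, st.held s = some c → st.held s' = some c → s = s'
  held_ge : ∀ s c, s ∈ st.proposed c → ∃ c', st.held s = some c' ∧ (prefS s).le c c'
  proposed_upper : ∀ s s' c, s ∈ st.proposed c → (prefC c).lt s s' → s' ∈ st.proposed c

theorem proposes_eq_some {prefC : C → LinearOrder S} {st : DAState S C} {c : C} {s : S}
    (h : proposes prefC st c = some s) :
    (∀ s', st.held s' ≠ some c) ∧ ∀ s', s' ∉ st.proposed c → (prefC c).le s' s := by
  unfold proposes at h
  split_ifs at h with hc
  obtain rfl := Option.some.inj h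
  refine ⟨fun s' hs' => hc.1 ⟨s', hs'⟩, fun s' hs' => ?_⟩
  exact @Finset.le_max' _ (prefC c) _ _ (by simpa using hs')

theorem proposes_eq_none {prefC : C → LinearOrder S} {st : DAState S C} {c : C}
    (h : proposes prefC st c = none) :
    (∃ s, st.held s = some c) ∨ ∀ s, s ∈ st.proposed c := by
  unfold proposes at h
  split_ifs at h with hc
  by_contra! hcon
  obtain ⟨h1, s, hs⟩ := hcon
  exact hc ⟨fun ⟨s', hs'⟩ => h1 s' hs', s, by simpa using hs⟩

theorem of_daStep_held {prefS : S → LinearOrder C} {prefC : C → LinearOrder S}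
    {st : DAState S C} {c : C} {s : S} (h : (daStep prefS prefC st).held s = some c) :
    st.held s = some c ∨ proposes prefC st c = some s := by
  simp only [daStep] at h
  split_ifs at h with hc
  have hm := @Finset.max'_mem _ (prefS s) _ hc
  rw [Option.some.inj h] at hm
  simpa using hm

theorem daStep_held_ge {prefS : S → LinearOrder C} {prefC : C → LinearOrder S}
    {st : DAState S C} {c : C} {s : S}
    (h : st.held s = some c ∨ proposes prefC st c = some s) :
    ∃ c', (daStep prefS prefC st).held s = some c' ∧ (prefS s).le c c' := by
  have hm : c ∈ (st.held s).toFinset ∪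
      Finset.univ.filter (fun c => proposes prefC st c = some s) := by
    simpa using h
  simp only [daStep]
  rw [dif_pos ⟨c, hm⟩]
  exact ⟨_, rfl, @Finset.le_max' _ (prefS s) _ _ hm⟩

theorem mem_daStep_proposed {prefS : S → LinearOrder C} {prefC : C → LinearOrder S}
    {st : DAState S C} {c : C} {s : S} :
    s ∈ (daStep prefS prefC st).proposed c ↔
      s ∈ st.proposed c ∨ proposes prefC st c = some s := by
  simp only [daStep]
  cases h : proposes prefC st c with
  | none => simp
  | some t => simp [eq_comm, or_comm]

/-- A round preserves the invariant. Uniqueness of the holder survives because a consumer held before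
the round makes no proposal and any other consumer makes at most one. -/
theorem DAInvariant.step {prefS : S → LinearOrder C} {prefC : C → LinearOrder S}
    {st : DAState S C} (hI : DAInvariant prefS prefC st) :
    DAInvariant prefS prefC (daStep prefS prefC st) where
  held_proposed s c h :=
    mem_daStep_proposed.2 ((of_daStep_held h).imp_left (hI.held_proposed s c))
  held_unique s s' c h h' := by
    rcases of_daStep_held h with h | h <;> rcases of_daStep_held h' with h' | h'
    · exact hI.held_unique s s' c h h'
    · exact absurd h ((proposes_eq_some h').1 s)
    · exact absurd h' ((proposes_eq_some h).1 s')
    · exact Option.some.inj (h.symm.trans h')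
  held_ge s c h := by
    rcases mem_daStep_proposed.1 h with h | h
    · obtain ⟨c₁, h₁, hle₁⟩ := hI.held_ge s c h
      obtain ⟨c₂, h₂, hle₂⟩ := daStep_held_ge (prefS := prefS) (prefC := prefC) (.inl h₁)
      exact ⟨c₂, h₂, (prefS s).le_trans _ _ _ hle₁ hle₂⟩
    · exact daStep_held_ge (.inr h)
  proposed_upper s s' c h hlt := by
    refine mem_daStep_proposed.2 (.inl ?_)
    rcases mem_daStep_proposed.1 h with h | h
    · exact hI.proposed_upper s s' c h hlt
    · by_contra hs'
      exact (((prefC c).lt_iff_le_not_ge _ _).1 hlt).2 ((proposes_eq_some h).2 s' hs')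

theorem runDA_invariant (prefS : S → LinearOrder C) (prefC : C → LinearOrder S) (n : ℕ) :
    DAInvariant prefS prefC (runDA prefS prefC n) := by
  induction n with
  | zero => constructor <;> simp [runDA, daInit]
  | succ n ih =>
    simp only [runDA, Function.iterate_succ_apply'] at ih ⊢
    exact ih.step

/-- **Stability of the output (Proposition 2, one-to-one form).** The matching
output by the consumer-proposing deferred-acceptance algorithm (the tentative
matching at any round `n` at which the algorithm has terminated) is a
one-to-one matching and is stable: it admits no blocking pair. -/
theorem da_output_stable
    (prefS : S → LinearOrder C) (prefC : C → LinearOrder S)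
    (n : ℕ) (hn : TerminatedAt prefS prefC n) :
    IsOneToOneMatching (outputMatching prefS prefC n) ∧
    ∀ (s : S) (c : C),
      ¬ IsBlockingPair (sPrefRel prefS) (cPrefRel prefC)
          (outputMatching prefS prefC n) s c := by
  have hI := runDA_invariant prefS prefC n
  have hmem : ∀ s c, (s, c) ∈ outputMatching prefS prefC n ↔
      (runDA prefS prefC n).held s = some c := by
    simp [outputMatching]
  refine ⟨⟨fun s => ?_, fun c => ?_⟩, ?_⟩
  · rw [Finset.card_le_one]
    rintro ⟨a, b⟩ h ⟨a', b'⟩ h'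
    simp only [Finset.mem_filter, hmem] at h h'
    obtain ⟨h, rfl⟩ := h
    obtain ⟨h', rfl⟩ := h'
    rw [Option.some.inj (h.symm.trans h')]
  · rw [Finset.card_le_one]
    rintro ⟨a, b⟩ h ⟨a', b'⟩ h'
    simp only [Finset.mem_filter, hmem] at h h'
    obtain ⟨h, rfl⟩ := h
    obtain ⟨h', rfl⟩ := h'
    rw [hI.held_unique _ _ _ h h']
  · rintro s c ⟨-, hC, hS⟩
    have hs : s ∈ (runDA prefS prefC n).proposed c := by
      rcases proposes_eq_none (hn c) with ⟨s', hs'⟩ | hall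
      · exact hI.proposed_upper s' s c (hI.held_proposed s' c hs') (hC s' ((hmem _ _).2 hs'))
      · exact hall s
    obtain ⟨c', hc', hle⟩ := hI.held_ge s c hs
    exact (((prefS s).lt_iff_le_not_ge _ _).1 (hS c' ((hmem _ _).2 hc'))).2 hle

end
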